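/- Kuhn's theorem: Let T be a finite rooted tree whose internal nodes are partitioned among a finite set of players Π, and consider the game on T where the owner of the current node chooses a child, plays being the root-to-leaf paths, each play being assigned a cost profile; for each player i let ≾_i be a preference relation (a total, reflexive, transitive binary relation) on cost profiles. Then there exists a strategy profile (σ_i)_{i∈Π} such that for every player j and every strategy σ'_j of player j, the cost profile of ⟨σ'_j, (σ_i)_{i≠j}⟩ is ≾_j-below the cost profile of ⟨(σ_i)_{i∈Π}⟩. -/

import Mathlib

/-- A finite rooted game tree: a leaf carries a cost profile (of type `C`),
and an internal node is owned by a player and has a nonempty (finite) list of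
children (`t :: ts`). -/
inductive GTree (P : Type) (C : Type) : Type
  | leaf : C → GTree P C
  | node : P → GTree P C → List (GTree P C) → GTree P C

/-- `σ` is a (total encoding of a) strategy of player `i` on the game tree:
at every node owned by `i` it chooses one of the children. -/
def ValidStrat {P C : Type} (i : P) (σ : GTree P C → GTree P C) : Prop :=
  ∀ (t : GTree P C) (ts : List (GTree P C)), σ (GTree.node i t ts) ∈ t :: ts

/-- `OutcomeT prof t c` : the root-to-leaf play obtained by following the strategy
profile `prof` from the node `t` ends in a leaf with cost profile `c`. -/
inductive OutcomeT {P C : Type} (prof : P → GTree P C → GTree P C) :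
    GTree P C → C → Prop
  | leaf (c : C) : OutcomeT prof (GTree.leaf c) c
  | node (p : P) (t : GTree P C) (ts : List (GTree P C)) (c : C) :
      prof p (GTree.node p t ts) ∈ t :: ts →
      OutcomeT prof (prof p (GTree.node p t ts)) c →
      OutcomeT prof (GTree.node p t ts) c

open Classical in
mutual
/-- Backward-induction value of a tree. -/
noncomputable def GTree.kval {P C : Type} (pref : P → C → C → Prop) : GTree P C → C
  | .leaf c => c
  | .node p t ts => GTree.kfold pref p (GTree.kval pref t) ts
/-- Best value for `p` among an accumulator and the values of the trees of a list. -/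
noncomputable def GTree.kfold {P C : Type} (pref : P → C → C → Prop) (p : P) (acc : C) :
    List (GTree P C) → C
  | [] => acc
  | s :: ss => GTree.kfold pref p
      (if pref p acc (GTree.kval pref s) then GTree.kval pref s else acc) ss
end

theorem GTree.kfold_spec {P C : Type} (pref : P → C → C → Prop)
    (htotal : ∀ (i : P) (x y : C), pref i x y ∨ pref i y x)
    (hrefl : ∀ (i : P) (x : C), pref i x x)
    (htrans : ∀ (i : P) (x y z : C), pref i x y → pref i y z → pref i x z)
    (p : P) (ts : List (GTree P C)) : ∀ acc : C,
    pref p acc (GTree.kfold pref p acc ts) ∧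
    (∀ s ∈ ts, pref p (GTree.kval pref s) (GTree.kfold pref p acc ts)) ∧
    (GTree.kfold pref p acc ts = acc ∨
      ∃ s ∈ ts, GTree.kval pref s = GTree.kfold pref p acc ts) := by
  induction ts with
  | nil => intro acc; simp [GTree.kfold, hrefl]
  | cons s ss ih =>
    intro acc
    rw [GTree.kfold]
    split_ifs with h
    · obtain ⟨h1, h2, h3⟩ := ih (GTree.kval pref s)
      refine ⟨htrans _ _ _ _ h h1, ?_, ?_⟩
      · intro u hu
        rcases List.mem_cons.1 hu with rfl | hu
        · exact h1
        · exact h2 u hu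
      · rcases h3 with h3 | ⟨u, hu, h3⟩
        · exact Or.inr ⟨s, by simp, h3.symm⟩
        · exact Or.inr ⟨u, by simp [hu], h3⟩
    · obtain ⟨h1, h2, h3⟩ := ih acc
      refine ⟨h1, ?_, ?_⟩
      · intro u hu
        rcases List.mem_cons.1 hu with rfl | hu
        · exact htrans _ _ _ _ ((htotal p _ _).resolve_left h) h1
        · exact h2 u hu
      · rcases h3 with h3 | ⟨u, hu, h3⟩
        · exact Or.inl h3
        · exact Or.inr ⟨u, by simp [hu], h3⟩

/-- **Kuhn's theorem.** On a finite game tree whose internal nodes are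
partitioned among a finite set of players, given for each player `i` a preference
relation `pref i` (total, reflexive and transitive) on cost profiles, there exists a
strategy profile `prof` such that for every player `j` and every strategy `σ'` of
player `j`, the cost profile of the outcome of `⟨σ', prof_{-j}⟩` is
`pref j`-below the cost profile of the outcome of `prof`. -/
theorem kuhn {P C : Type} [Fintype P] [DecidableEq P]
    (pref : P → C → C → Prop)
    (htotal : ∀ (i : P) (x y : C), pref i x y ∨ pref i y x)
    (hrefl : ∀ (i : P) (x : C), pref i x x)
    (htrans : ∀ (i : P) (x y z : C), pref i x y → pref i y z → pref i x z)
    (t : GTree P C) :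
    ∃ prof : P → GTree P C → GTree P C,
      (∀ i : P, ValidStrat i (prof i)) ∧
      ∀ (j : P) (σ' : GTree P C → GTree P C), ValidStrat j σ' →
        ∀ c c' : C, OutcomeT prof t c →
          OutcomeT (Function.update prof j σ') t c' →
          pref j c' c := by
  have hmax : ∀ (p : P) (t : GTree P C) (ts : List (GTree P C)), ∀ s ∈ t :: ts,
      pref p (GTree.kval pref s) (GTree.kval pref (GTree.node p t ts)) := by
    intro p t ts s hs
    obtain ⟨h1, h2, -⟩ := GTree.kfold_spec pref htotal hrefl htrans p ts (GTree.kval pref t)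
    rw [GTree.kval.eq_2]
    rcases List.mem_cons.1 hs with rfl | hs
    · exact h1
    · exact h2 s hs
  have hex : ∀ x : GTree P C, ∃ y : GTree P C, ∀ p t ts, x = GTree.node p t ts →
      y ∈ t :: ts ∧ GTree.kval pref y = GTree.kval pref x := by
    intro x
    cases x with
    | leaf c => exact ⟨.leaf c, fun p t ts h => by cases h⟩
    | node p t ts =>
      obtain ⟨-, -, h3⟩ := GTree.kfold_spec pref htotal hrefl htrans p ts (GTree.kval pref t)
      rw [← GTree.kval.eq_2] at h3
      rcases h3 with h3 | ⟨u, hu, h3⟩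
      · refine ⟨t, fun p' t' ts' h => ?_⟩
        cases h
        exact ⟨by simp, h3.symm⟩
      · refine ⟨u, fun p' t' ts' h => ?_⟩
        cases h
        exact ⟨by simp [hu], h3⟩
  choose f hf using hex
  refine ⟨fun _ => f, fun i t ts => (hf _ i t ts rfl).1, ?_⟩
  intro j σ' _ c c' hc hc'
  have e : c = GTree.kval pref t := by
    clear hc'
    induction hc with
    | leaf c => rw [GTree.kval.eq_1]
    | node p t ts c _ _ ih => rw [ih]; exact (hf _ p t ts rfl).2
  rw [e]
  clear hc e
  induction hc' with
  | leaf c => rw [GTree.kval.eq_1]; exact hrefl _ _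
  | node p t ts c hm _ ih =>
    by_cases hp : p = j
    · subst hp
      exact htrans _ _ _ _ ih (hmax _ _ _ _ hm)
    · rw [Function.update_of_ne hp] at ih
      rw [(hf _ p t ts rfl).2] at ih
      exact ih
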